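/- There exists a nonempty legal sequence τ of moves in the auxiliary game whose initial position and resulting position both equal the starting position P and which satisfies F(τ, i, 2) = 1 for every i with 1 ≤ i ≤ m. -/

import Mathlib

/-!
The auxiliary game of Shitov, "Chess God's number grows exponentially".

Fix `m ≥ 1`.  The graph `G` has cycle vertices `(0,t)` for `t ∈ ℤ/3m` and triangle
vertices `(i,j)` for `1 ≤ i ≤ m`, `j ∈ {1,2,3}`.  We use 0-based indices: the
triangle vertex `(i,j)` of the paper (with `1 ≤ i ≤ m`, `1 ≤ j ≤ 3`) is
`Vtx.tri ⟨i-1⟩ ⟨j-1⟩`, and its paired cycle vertex `(0, 3i+j-3)` is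
`Vtx.cycle (pairC ⟨i-1⟩ ⟨j-1⟩)` where `pairC i j = 3*i + j + 1 (mod 3m)`.
-/

namespace AuxGame

/-- What occupies a vertex: nothing, the chip, or a switch. -/
inductive Occ : Type
  | empty : Occ
  | chip : Occ
  | switch : Occ
deriving DecidableEq

/-- Vertices of the graph `G`: the big cycle of length `3m`, and `m` triangles. -/
inductive Vtx (m : ℕ) : Type
  | cycle : ZMod (3 * m) → Vtx m
  | tri : Fin m → ZMod 3 → Vtx m
deriving DecidableEq

/-- The cycle vertex paired with the triangle vertex `(i,j)` (0-based):
this is the vertex `(0, 3i+j-3)` of the paper. -/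
def pairC {m : ℕ} (i : Fin m) (j : ZMod 3) : ZMod (3 * m) :=
  ((3 * i.val + j.val + 1 : ℕ) : ZMod (3 * m))

/-- Adjacency in `G`: consecutive vertices of the big cycle, and distinct
vertices of one triangle. -/
def Adjacent {m : ℕ} : Vtx m → Vtx m → Prop
  | .cycle t, .cycle t' => t' = t + 1 ∨ t' = t - 1
  | .tri i j, .tri i' j' => i = i' ∧ j ≠ j'
  | _, _ => False

/-- `u` and `v` form a pair `{(i,j), (0,3i+j-3)}` (in either order). -/
def IsPair {m : ℕ} : Vtx m → Vtx m → Prop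
  | .tri i j, .cycle t => t = pairC i j
  | .cycle t, .tri i j => t = pairC i j
  | _, _ => False

/-- A position of the auxiliary game: every vertex is empty, or carries the chip,
or carries (exactly) one switch; there is exactly one chip; and for every pair
`{(i,j), (0,3i+j-3)}` at least one of the two vertices carries a switch. -/
structure Pos (m : ℕ) where
  occ : Vtx m → Occ
  chip_exists_unique : ∃! v : Vtx m, occ v = Occ.chip
  switch_pair : ∀ (i : Fin m) (j : ZMod 3),
    occ (Vtx.tri i j) = Occ.switch ∨ occ (Vtx.cycle (pairC i j)) = Occ.switch

/-- A single move: the chip moves from vertex `from'` to vertex `to'`,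
transforming position `src` into position `dst`. -/
structure Move (m : ℕ) where
  src : Pos m
  dst : Pos m
  from' : Vtx m
  to' : Vtx m

/-- Legality of a single move: either a *jump* (the chip moves to an adjacent
vacant vertex of its triangle, or to an adjacent vacant vertex of the cycle),
or a *swap* (the chip, standing on one vertex of a pair, is exchanged with the
switch on the other vertex of that pair).  In both cases the destination gets
the chip, the source gets whatever was at the destination (nothing for a jump,
the switch for a swap), and all other vertices are unchanged. -/
def Move.Legal {m : ℕ} (mv : Move m) : Prop :=
  mv.src.occ mv.from' = Occ.chip ∧
  ((Adjacent mv.from' mv.to' ∧ mv.src.occ mv.to' = Occ.empty) ∨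
    (IsPair mv.from' mv.to' ∧ mv.src.occ mv.to' = Occ.switch)) ∧
  mv.dst.occ mv.to' = Occ.chip ∧
  mv.dst.occ mv.from' = mv.src.occ mv.to' ∧
  ∀ w : Vtx m, w ≠ mv.from' → w ≠ mv.to' → mv.dst.occ w = mv.src.occ w

/-- `Leads σ A B`: `σ` is a legal sequence of moves with initial position `A`
and resulting position `B` (each move is legal, and the resulting position of
each move is the initial position of the next one). -/
inductive Leads {m : ℕ} : List (Move m) → Pos m → Pos m → Prop
  | nil (A : Pos m) : Leads [] A A
  | cons (mv : Move m) (σ : List (Move m)) (B : Pos m) :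
      mv.Legal → Leads σ mv.dst B → Leads (mv :: σ) mv.src B

/-- `σ` is a legal sequence of moves. -/
def LegalSeq {m : ℕ} (σ : List (Move m)) : Prop :=
  ∃ A B : Pos m, Leads σ A B

/-- `#(σ, u, v)`: the number of single moves in `σ` carrying the chip from
vertex `u` to vertex `v` (used with `u`, `v` in one component, where such moves
are exactly jumps). -/
def jmpCount {m : ℕ} (σ : List (Move m)) (u v : Vtx m) : ℕ :=
  (σ.filter fun mv => decide (mv.from' = u ∧ mv.to' = v)).length

/-- The successor of a vertex in its own component: `(0,t) ↦ (0,t+1)` and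
`(i,j) ↦ (i,j+1 mod 3)`. -/
def nxt {m : ℕ} : Vtx m → Vtx m
  | .cycle t => .cycle (t + 1)
  | .tri i j => .tri i (j + 1)

/-- The predecessor of a vertex in its own component. -/
def prv {m : ℕ} : Vtx m → Vtx m
  | .cycle t => .cycle (t - 1)
  | .tri i j => .tri i (j - 1)

/-- Twice the flow through a vertex `v = (i₀,j₀)`:
`#(σ,i₀,j₀-1,j₀) + #(σ,i₀,j₀,j₀+1) - #(σ,i₀,j₀+1,j₀) - #(σ,i₀,j₀,j₀-1)` as an integer. -/
def dflow {m : ℕ} (σ : List (Move m)) (v : Vtx m) : ℤ :=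
  (jmpCount σ (prv v) v : ℤ) + (jmpCount σ v (nxt v) : ℤ)
    - (jmpCount σ (nxt v) v : ℤ) - (jmpCount σ v (prv v) : ℤ)

/-- The flow `F(σ, i₀, j₀)` through the vertex `v = (i₀,j₀)`. -/
def flow {m : ℕ} (σ : List (Move m)) (v : Vtx m) : ℚ :=
  (dflow σ v : ℚ) / 2

/-- `P` is the starting position: switches on `(i,1)`, `(i,3)`, `(0,3i-1)`
(0-based: `tri i 0`, `tri i 2`, `cycle (pairC i 1)`), the chip on some cycle
vertex not of the form `(0,3i-1)`, and all other vertices empty. -/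
def IsStarting {m : ℕ} (P : Pos m) : Prop :=
  (∀ i : Fin m,
    P.occ (Vtx.tri i 0) = Occ.switch ∧
    P.occ (Vtx.tri i 1) = Occ.empty ∧
    P.occ (Vtx.tri i 2) = Occ.switch ∧
    P.occ (Vtx.cycle (pairC i 1)) = Occ.switch) ∧
  ∃ t : ZMod (3 * m),
    (∀ i : Fin m, t ≠ pairC i 1) ∧
    P.occ (Vtx.cycle t) = Occ.chip ∧
    ∀ s : ZMod (3 * m), s ≠ t → (∀ i : Fin m, s ≠ pairC i 1) →
      P.occ (Vtx.cycle s) = Occ.empty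

end AuxGame

/-!
Suppose every pair `{(i,j), (0,3i+j-3)}` carries exactly one switch. Then the position is given by
the side, cycle or triangle, of the free vertex of each pair, together with the pair holding the
chip. In the starting position the free sides over `(i,1), (i,2), (i,3)` alternate: cycle, triangle,
cycle. Let the chip stand on pair `j` of triangle `i`. A swap moves it to the side on which pair
`j + 1` is free, so it can jump forward there, and afterwards the free sides alternate again when
read from `j + 1`. Six rounds of a swap and a forward jump, starting from `(0,3i-2)`, carry the
chip once around the triangle `i` and three steps forward on the cycle, to the first pair of
triangle `i + 1`, and restore all the switches. After `m` such passes the chip is back, and it has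
crossed every edge of every component exactly once, forward. Hence the flow through every vertex
is `1`.
-/

namespace AuxGame

/-- The pairs `{(i,j), (0,3i+j-3)}`, indexed by `(i,j)` (0-based). -/
abbrev Site (m : ℕ) : Type := Fin m × ZMod 3

/-- The two vertices of a pair: one lies on the big cycle, the other on a triangle. -/
inductive Side : Type
  | cycle : Side
  | tri : Side
deriving DecidableEq

/-- The other vertex of the pair. -/
def Side.flip : Side → Side
  | .cycle => .tri
  | .tri => .cycle

lemma Side.flip_ne (s : Side) : s.flip ≠ s := by cases s <;> decide

lemma Side.flip_flip (s : Side) : s.flip.flip = s := by cases s <;> rfl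

lemma Side.ne_iff_eq_flip {s s' : Side} : s ≠ s' ↔ s = s'.flip := by
  cases s <;> cases s' <;> decide

variable {m : ℕ}

/-- The vertex of `G` on a given side of a given pair. -/
def vtx : Site m × Side → Vtx m
  | (k, .cycle) => .cycle (pairC k.1 k.2)
  | (k, .tri) => .tri k.1 k.2

/-! ### Vertices and edges of the graph -/

lemma pairC_injective : Function.Injective fun k : Site m => pairC k.1 k.2 := by
  rintro ⟨i, j⟩ ⟨i', j'⟩ h
  have hj : j.val < 3 := ZMod.val_lt j
  have hj' : j'.val < 3 := ZMod.val_lt j'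
  have h_cast : ((3 * i.val + j.val : ℕ) : ZMod (3 * m)) = (3 * i'.val + j'.val : ℕ) := by
    simpa [pairC] using h
  rw [ZMod.natCast_eq_natCast_iff', Nat.mod_eq_of_lt (by omega), Nat.mod_eq_of_lt (by omega)]
    at h_cast
  have hi : i = i' := Fin.ext (by omega)
  have hj : j = j' := ZMod.val_injective 3 (by omega)
  rw [hi, hj]

lemma pairC_surjective [NeZero m] : Function.Surjective fun k : Site m => pairC k.1 k.2 := by
  refine ((Fintype.bijective_iff_injective_and_card _).2 ⟨pairC_injective, ?_⟩).2
  simp [ZMod.card, mul_comm]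

lemma vtx_injective : Function.Injective (vtx (m := m)) := by
  rintro ⟨k, _ | _⟩ ⟨k', _ | _⟩ h <;> simp only [vtx, reduceCtorEq, Vtx.cycle.injEq] at h
  · rw [pairC_injective h]
  · simpa [Prod.ext_iff] using h

lemma vtx_surjective [NeZero m] : Function.Surjective (vtx (m := m)) := by
  rintro (t | ⟨i, j⟩)
  · obtain ⟨k, rfl⟩ := pairC_surjective t
    exact ⟨(k, .cycle), rfl⟩
  · exact ⟨((i, j), .tri), rfl⟩

lemma isPair_vtx_flip (k : Site m) (s : Side) : IsPair (vtx (k, s)) (vtx (k, s.flip)) := by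
  cases s <;> rfl

lemma nxt_injective : Function.Injective (nxt (m := m)) := by
  rintro (t | ⟨i, j⟩) (t' | ⟨i', j'⟩) h <;> simp_all [nxt]

lemma nxt_prv (v : Vtx m) : nxt (prv v) = v := by cases v <;> simp [nxt, prv]

lemma adjacent_nxt (v : Vtx m) : Adjacent v (nxt v) := by cases v <;> simp [nxt, Adjacent]

lemma nxt_nxt_ne [NeZero m] (v : Vtx m) : nxt (nxt v) ≠ v := by
  rcases v with t | ⟨i, j⟩
  · have h_two : ((2 : ℕ) : ZMod (3 * m)) ≠ 0 := by
      rw [Ne, ZMod.natCast_eq_zero_iff]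
      have := NeZero.pos m
      exact Nat.not_dvd_of_pos_of_lt two_pos (by omega)
    simpa [nxt, add_assoc, one_add_one_eq_two] using h_two
  · have h_two : (1 + 1 : ZMod 3) ≠ 0 := by decide
    simpa [nxt, add_assoc] using h_two

lemma not_isPair_nxt_right (v : Vtx m) : ¬ IsPair v (nxt v) := by cases v <;> exact id

lemma not_isPair_nxt_left (v : Vtx m) : ¬ IsPair (nxt v) v := by cases v <;> exact id

lemma pairC_add_one (i : Fin m) {j : ZMod 3} (hj : j ≠ 2) : pairC i (j + 1) = pairC i j + 1 := by
  have h_val : ∀ j : ZMod 3, j ≠ 2 → (j + 1).val = j.val + 1 := by decide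
  simp only [pairC, h_val j hj]
  push_cast
  ring

lemma pairC_succ_zero [NeZero m] (i : Fin m) : pairC (i + 1) 0 = pairC i 2 + 1 := by
  have h_val : (2 : ZMod 3).val = 2 := rfl
  have h_mod : (i.val + 1 % m) % m ≡ i.val + 1 [MOD m] := by simp [Nat.ModEq]
  simp only [pairC, h_val, ZMod.val_zero]
  rw [← Nat.cast_succ, ZMod.natCast_eq_natCast_iff, Fin.val_add, Fin.val_one']
  exact (h_mod.mul_left' 3).add_right 1

lemma nxt_vtx_tri (i : Fin m) (j : ZMod 3) : nxt (vtx ((i, j), .tri)) = vtx ((i, j + 1), .tri) :=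
  rfl

lemma nxt_vtx_cycle (i : Fin m) {j : ZMod 3} (hj : j ≠ 2) :
    nxt (vtx ((i, j), .cycle)) = vtx ((i, j + 1), .cycle) :=
  congrArg Vtx.cycle (pairC_add_one i hj).symm

lemma nxt_vtx_cycle_two [NeZero m] (i : Fin m) :
    nxt (vtx ((i, 2), .cycle)) = vtx ((i + 1, 0), .cycle) :=
  congrArg Vtx.cycle (pairC_succ_zero i).symm

/-! ### Routes and the edges they cross -/

/-- The net number of jumps of `σ` along the edge from `v` to `nxt v`. -/
def edgeFlow (σ : List (Move m)) (v : Vtx m) : ℤ :=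
  (jmpCount σ v (nxt v) : ℤ) - jmpCount σ (nxt v) v

lemma flow_eq_edgeFlow_add (σ : List (Move m)) (v : Vtx m) :
    flow σ v = (edgeFlow σ (prv v) + edgeFlow σ v : ℤ) / 2 := by
  simp only [flow, dflow, edgeFlow, nxt_prv]
  congr 2
  ring

lemma edgeFlow_nil : edgeFlow ([] : List (Move m)) = 0 := rfl

lemma edgeFlow_append (σ τ : List (Move m)) : edgeFlow (σ ++ τ) = edgeFlow σ + edgeFlow τ := by
  funext v
  simp only [edgeFlow, jmpCount, List.filter_append, List.length_append, Pi.add_apply]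
  push_cast
  ring

lemma jmpCount_singleton (mv : Move m) (u v : Vtx m) :
    jmpCount [mv] u v = if mv.from' = u ∧ mv.to' = v then 1 else 0 := by
  by_cases h : mv.from' = u ∧ mv.to' = v <;> simp [jmpCount, h]

lemma edgeFlow_singleton_of_isPair {mv : Move m} (h : IsPair mv.from' mv.to') :
    edgeFlow [mv] = 0 := by
  funext v
  have h_forward : ¬ (mv.from' = v ∧ mv.to' = nxt v) := fun ⟨hu, hv⟩ =>
    not_isPair_nxt_right v (by rwa [hu, hv] at h)
  have h_backward : ¬ (mv.from' = nxt v ∧ mv.to' = v) := fun ⟨hu, hv⟩ =>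
    not_isPair_nxt_left v (by rwa [hu, hv] at h)
  simp [edgeFlow, jmpCount_singleton, h_forward, h_backward]

lemma edgeFlow_singleton_of_nxt [NeZero m] {mv : Move m} (h : nxt mv.from' = mv.to') :
    edgeFlow [mv] = Pi.single mv.from' 1 := by
  funext v
  have h_forward : (mv.from' = v ∧ mv.to' = nxt v) ↔ v = mv.from' := by
    rw [← h, nxt_injective.eq_iff, and_self, eq_comm]
  have h_backward : ¬ (mv.from' = nxt v ∧ mv.to' = v) := fun ⟨hu, hv⟩ =>
    nxt_nxt_ne v (by rw [← hu, h, hv])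
  simp [edgeFlow, jmpCount_singleton, h_forward, h_backward, Pi.single_apply]

lemma Leads.append {σ τ : List (Move m)} {A B C : Pos m} (hσ : Leads σ A B) (hτ : Leads τ B C) :
    Leads (σ ++ τ) A C := by
  induction hσ with
  | nil => exact hτ
  | cons mv σ B h_legal _ ih => exact .cons mv _ _ h_legal (ih hτ)

/-- Some legal sequence leads from `A` to `B` with net edge crossings `f`. -/
def HasRoute (A B : Pos m) (f : Vtx m → ℤ) : Prop :=
  ∃ τ : List (Move m), Leads τ A B ∧ edgeFlow τ = f

namespace HasRoute

lemma refl (A : Pos m) : HasRoute A A 0 := ⟨[], .nil A, edgeFlow_nil⟩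

lemma trans {A B C : Pos m} {f g : Vtx m → ℤ} (hf : HasRoute A B f) (hg : HasRoute B C g) :
    HasRoute A C (f + g) := by
  obtain ⟨σ, hσ, rfl⟩ := hf
  obtain ⟨τ, hτ, rfl⟩ := hg
  exact ⟨σ ++ τ, hσ.append hτ, edgeFlow_append σ τ⟩

lemma of_legal {mv : Move m} (h : mv.Legal) : HasRoute mv.src mv.dst (edgeFlow [mv]) :=
  ⟨[mv], .cons mv [] _ h (.nil _), rfl⟩

open scoped Fin.CommRing in
lemma iterate {n : ℕ} [NeZero n] {A : Fin n → Pos m} {f : Fin n → Vtx m → ℤ}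
    (h : ∀ i, HasRoute (A i) (A (i + 1)) (f i)) (i : Fin n) (l : ℕ) :
    HasRoute (A i) (A (i + l)) (∑ k ∈ Finset.range l, f (i + k)) := by
  induction l with
  | zero => simpa using refl (A i)
  | succ l ih =>
    rw [Finset.sum_range_succ, Nat.cast_succ, ← add_assoc]
    exact ih.trans (h _)

open scoped Fin.CommRing in
lemma loop {n : ℕ} [NeZero n] {A : Fin n → Pos m} {f : Fin n → Vtx m → ℤ}
    (h : ∀ i, HasRoute (A i) (A (i + 1)) (f i)) (i : Fin n) :
    HasRoute (A i) (A i) (∑ k, f k) := by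
  have h_round := iterate h i n
  rw [Fin.natCast_self, add_zero, Finset.sum_range] at h_round
  simp only [Fin.cast_val_eq_self] at h_round
  rwa [← Equiv.sum_comp (Equiv.addLeft i) f]

lemma loop_of_alternating {n : ℕ} [NeZero n] {A B : Fin n → Pos m} {f g : Fin n → Vtx m → ℤ}
    (hf : ∀ i, HasRoute (A i) (B i) (f i)) (hg : ∀ i, HasRoute (B i) (A (i + 1)) (g i))
    (i : Fin n) : HasRoute (B i) (B i) (∑ k, (f k + g k)) := by
  have h_loop := loop (fun i => (hg i).trans (hf (i + 1))) i
  have h_shift : ∑ k, f (k + 1) = ∑ k, f k := Equiv.sum_comp (Equiv.addRight 1) f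
  rwa [Finset.sum_add_distrib, h_shift, add_comm, ← Finset.sum_add_distrib] at h_loop

end HasRoute

/-! ### Positions with one switch on each pair -/

lemma Pos.occ_flip_eq_switch (P : Pos m) {k : Site m} {s : Side}
    (h : P.occ (vtx (k, s)) ≠ .switch) : P.occ (vtx (k, s.flip)) = .switch := by
  cases s
  · exact (P.switch_pair k.1 k.2).resolve_right h
  · exact (P.switch_pair k.1 k.2).resolve_left h

/-- The occupation of the sides of the pairs when the chip is on the pair `p`, on its side `free p`,
and each pair `k` has its only switch opposite to the side `free k`. -/
def siteOcc (free : Site m → Side) (p : Site m) (q : Site m × Side) : Occ :=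
  if q.2 = free q.1 then (if q.1 = p then .chip else .empty) else .switch

section PosOf

variable [NeZero m]

/-- The bijection between the vertices of `G` and the sides of its pairs. -/
noncomputable def vtxEquiv : Site m × Side ≃ Vtx m :=
  Equiv.ofBijective vtx ⟨vtx_injective, vtx_surjective⟩

/-- The position with exactly one switch on each pair, opposite to the side `free k` of the pair
`k`, and with the chip on the side `free p` of the pair `p`. -/
noncomputable def posOf (free : Site m → Side) (p : Site m) : Pos m where
  occ v := siteOcc free p (vtxEquiv.symm v)
  chip_exists_unique := by
    refine (vtxEquiv.symm.existsUnique_congr_left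
      (p := fun v => siteOcc free p (vtxEquiv.symm v) = .chip)).2 ⟨(p, free p), ?_, ?_⟩
    · simp [siteOcc]
    · rintro ⟨k, s⟩ h
      simp only [Equiv.symm_symm, Equiv.symm_apply_apply, siteOcc] at h
      split_ifs at h with h_side h_site
      rw [← h_site, ← h_side]
  switch_pair i j := by
    rw [show Vtx.tri i j = vtxEquiv ((i, j), .tri) from rfl,
      show Vtx.cycle (pairC i j) = vtxEquiv ((i, j), .cycle) from rfl]
    cases h : free (i, j) <;> simp [siteOcc, h]

lemma posOf_occ_vtx (free : Site m → Side) (p : Site m) (q : Site m × Side) :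
    (posOf free p).occ (vtx q) = siteOcc free p q :=
  congrArg (siteOcc free p) (vtxEquiv.symm_apply_apply q)

lemma eq_posOf {P : Pos m} {free : Site m → Side} {p : Site m}
    (h_chip : P.occ (vtx (p, free p)) = .chip)
    (h_empty : ∀ k ≠ p, P.occ (vtx (k, free k)) = .empty) : P = posOf free p := by
  have h_occ : P.occ = (posOf free p).occ := by
    funext v
    obtain ⟨⟨k, s⟩, rfl⟩ := vtx_surjective v
    simp only [posOf_occ_vtx, siteOcc]
    split_ifs with h_side h_site
    · rwa [h_side, h_site]
    · rw [h_side, h_empty k h_site]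
    · have h_free : P.occ (vtx (k, free k)) ≠ .switch := by
        by_cases h_site : k = p
        · simp [h_site, h_chip]
        · simp [h_empty k h_site]
      rw [Side.ne_iff_eq_flip.1 h_side]
      exact P.occ_flip_eq_switch h_free
  cases P
  cases h_occ
  rfl

lemma legal_swap (free : Site m → Side) (p : Site m) :
    (Move.mk (posOf free p) (posOf (Function.update free p (free p).flip) p)
      (vtx (p, free p)) (vtx (p, (free p).flip))).Legal := by
  refine ⟨?_, .inr ⟨isPair_vtx_flip p (free p), ?_⟩, ?_, ?_, fun v h_from h_to => ?_⟩
  · simp [posOf_occ_vtx, siteOcc]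
  · simp [posOf_occ_vtx, siteOcc, Side.flip_ne]
  · simp [posOf_occ_vtx, siteOcc]
  · simp [posOf_occ_vtx, siteOcc, Side.flip_ne, (Side.flip_ne _).symm]
  · obtain ⟨⟨k, s⟩, rfl⟩ := vtx_surjective v
    have h_site : k ≠ p := by
      rintro rfl
      by_cases h_side : s = free k
      · exact h_from (by rw [h_side])
      · exact h_to (by rw [Side.ne_iff_eq_flip.1 h_side])
    simp [posOf_occ_vtx, siteOcc, h_site]

lemma legal_jump {free : Site m → Side} {p p' : Site m} (h_ne : p ≠ p')
    (h_adj : Adjacent (vtx (p, free p)) (vtx (p', free p'))) :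
    (Move.mk (posOf free p) (posOf free p') (vtx (p, free p)) (vtx (p', free p'))).Legal := by
  refine ⟨?_, .inl ⟨h_adj, ?_⟩, ?_, ?_, fun v h_from h_to => ?_⟩
  · simp [posOf_occ_vtx, siteOcc]
  · simp [posOf_occ_vtx, siteOcc, h_ne.symm]
  · simp [posOf_occ_vtx, siteOcc]
  · simp [posOf_occ_vtx, siteOcc, h_ne, h_ne.symm]
  · obtain ⟨⟨k, s⟩, rfl⟩ := vtx_surjective v
    simp only [posOf_occ_vtx, siteOcc]
    split_ifs with h_side h_to_site h_from_site h_from_site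
    · exact absurd (by rw [h_side, h_to_site]) h_to
    · exact absurd (by rw [h_side, h_to_site]) h_to
    · exact absurd (by rw [h_side, h_from_site]) h_from
    · rfl
    · rfl

lemma HasRoute.swap (free : Site m → Side) (p : Site m) :
    HasRoute (posOf free p) (posOf (Function.update free p (free p).flip) p) 0 := by
  have h_route := HasRoute.of_legal (legal_swap free p)
  rwa [edgeFlow_singleton_of_isPair (isPair_vtx_flip p (free p))] at h_route

lemma HasRoute.jump {free : Site m → Side} {p p' : Site m}
    (h : nxt (vtx (p, free p)) = vtx (p', free p')) :
    HasRoute (posOf free p) (posOf free p') (Pi.single (vtx (p, free p)) 1) := by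
  have h_ne : p ≠ p' := by
    rintro rfl
    exact nxt_nxt_ne _ (by rw [h, h])
  have h_route := HasRoute.of_legal (legal_jump h_ne (h ▸ adjacent_nxt _))
  rwa [edgeFlow_singleton_of_nxt h] at h_route

end PosOf

/-! ### The tour -/

/-- The free sides in the starting position. -/
def homeSide (k : Site m) : Side := if k.2 = 1 then .tri else .cycle

/-- The free sides that read `s, s.flip, s` on the pairs `j, j + 1, j + 2` of the triangle `i` and
are as in the starting position on all other triangles. -/
def alternatingSide (i : Fin m) (j : ZMod 3) (s : Side) (k : Site m) : Side :=
  if k.1 = i then (if k.2 = j + 1 then s.flip else s) else homeSide k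

lemma alternatingSide_zero_cycle (i : Fin m) : alternatingSide i 0 .cycle = homeSide := by
  funext k
  simp [alternatingSide, homeSide, Side.flip]

lemma alternatingSide_self (i : Fin m) (j : ZMod 3) (s : Side) :
    alternatingSide i j s (i, j) = s := by
  simp [alternatingSide]

lemma alternatingSide_add_one (i : Fin m) (j : ZMod 3) (s : Side) :
    Function.update (alternatingSide i j s) (i, j) s.flip = alternatingSide i (j + 1) s.flip := by
  funext ⟨i', j'⟩
  by_cases hi : i' = i
  · have h_cases : ∀ j j' : ZMod 3, j' = j ∨ j' = j + 1 ∨ j' = j + 1 + 1 := by decide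
    have h_two : ∀ j : ZMod 3, j + 1 + 1 ≠ j := by decide
    rcases h_cases j j' with rfl | rfl | rfl <;>
      simp [alternatingSide, hi, h_two, (h_two _).symm, Side.flip_flip]
  · simp [alternatingSide, hi]

lemma sum_zmod_three {M : Type*} [AddCommMonoid M] (f : ZMod 3 → M) :
    ∑ j, f j = f 0 + f 1 + f 2 :=
  Fin.sum_univ_three f

/-- One crossing of each edge from `v` to `nxt v` with `v` in a pair of the triangle `i`. -/
def blockFlow (i : Fin m) : Vtx m → ℤ :=
  ∑ j : ZMod 3, (Pi.single (vtx ((i, j), .cycle)) 1 + Pi.single (vtx ((i, j), .tri)) 1)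

variable [NeZero m]

lemma sum_blockFlow : ∑ i : Fin m, blockFlow i = 1 := by
  have h_sites : ∑ i : Fin m, blockFlow i =
      ∑ k : Site m, (Pi.single (vtx (k, .cycle)) 1 + Pi.single (vtx (k, .tri)) 1) := by
    simp only [blockFlow, Fintype.sum_prod_type]
  funext v
  obtain ⟨⟨k, s⟩, rfl⟩ := vtx_surjective v
  rw [h_sites]
  cases s <;> simp [Finset.sum_apply, Pi.single_apply, vtx_injective.eq_iff]

lemma HasRoute.swap_alternatingSide (i : Fin m) (j : ZMod 3) (s : Side) :
    HasRoute (posOf (alternatingSide i j s) (i, j))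
      (posOf (alternatingSide i (j + 1) s.flip) (i, j)) 0 := by
  have h_route := HasRoute.swap (alternatingSide i j s) (i, j)
  rwa [alternatingSide_self, alternatingSide_add_one] at h_route

lemma HasRoute.swap_jump_alternatingSide {i : Fin m} {j : ZMod 3} {s : Side}
    (h : nxt (vtx ((i, j), s.flip)) = vtx ((i, j + 1), s.flip)) :
    HasRoute (posOf (alternatingSide i j s) (i, j))
      (posOf (alternatingSide i (j + 1) s.flip) (i, j + 1))
      (Pi.single (vtx ((i, j), s.flip)) 1) := by
  have h_from : alternatingSide i (j + 1) s.flip (i, j) = s.flip := by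
    rw [← alternatingSide_add_one, Function.update_self]
  have h_to := alternatingSide_self i (j + 1) s.flip
  have h_jump := HasRoute.jump (free := alternatingSide i (j + 1) s.flip) (p := (i, j))
    (p' := (i, j + 1)) (by rwa [h_from, h_to])
  simpa only [h_from, zero_add] using (HasRoute.swap_alternatingSide i j s).trans h_jump

lemma hasRoute_across (i : Fin m) :
    HasRoute (posOf homeSide (i, 0)) (posOf homeSide (i, 2))
      (blockFlow i - Pi.single (vtx ((i, 2), .cycle)) 1) := by
  have h_route :=
    (HasRoute.swap_jump_alternatingSide (s := .cycle) (nxt_vtx_tri i 0)).trans <|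
    (HasRoute.swap_jump_alternatingSide (s := .tri) (nxt_vtx_cycle i (j := 1) (by decide))).trans <|
    (HasRoute.swap_jump_alternatingSide (s := .cycle) (nxt_vtx_tri i 2)).trans <|
    (HasRoute.swap_jump_alternatingSide (s := .tri) (nxt_vtx_cycle i (j := 0) (by decide))).trans <|
    (HasRoute.swap_jump_alternatingSide (s := .cycle) (nxt_vtx_tri i 1)).trans <|
    HasRoute.swap_alternatingSide i 2 .tri
  have h_flow : blockFlow i - Pi.single (vtx ((i, 2), .cycle)) 1 =
      Pi.single (vtx ((i, 0), .tri)) 1 + (Pi.single (vtx ((i, 1), .cycle)) 1 +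
      (Pi.single (vtx ((i, 2), .tri)) 1 + (Pi.single (vtx ((i, 0), .cycle)) 1 +
      (Pi.single (vtx ((i, 1), .tri)) 1 + 0)))) := by
    rw [blockFlow, sum_zmod_three]
    abel
  rw [← alternatingSide_zero_cycle i, h_flow]
  exact h_route

lemma hasRoute_next (i : Fin m) :
    HasRoute (posOf homeSide (i, 2)) (posOf homeSide (i + 1, 0))
      (Pi.single (vtx ((i, 2), .cycle)) 1) :=
  HasRoute.jump (nxt_vtx_cycle_two i)

lemma hasRoute_home_loop {p : Site m} (hp : p.2 ≠ 1) :
    HasRoute (posOf homeSide p) (posOf homeSide p) 1 := by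
  obtain ⟨i, j⟩ := p
  have h_cases : ∀ j : ZMod 3, j ≠ 1 → j = 0 ∨ j = 2 := by decide
  rcases h_cases j hp with rfl | rfl
  · have h_loop := HasRoute.loop (fun i => (hasRoute_across i).trans (hasRoute_next i)) i
    simpa only [sub_add_cancel, sum_blockFlow] using h_loop
  · have h_loop := HasRoute.loop_of_alternating hasRoute_across hasRoute_next i
    simpa only [sub_add_cancel, sum_blockFlow] using h_loop

lemma IsStarting.exists_eq_posOf {P : Pos m} (hP : IsStarting P) :
    ∃ p : Site m, p.2 ≠ 1 ∧ P = posOf homeSide p := by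
  obtain ⟨h_tri, t, ht, h_chip, h_empty⟩ := hP
  obtain ⟨p, rfl⟩ := pairC_surjective t
  have hp : p.2 ≠ 1 := fun h => ht p.1 (by simp only [h])
  refine ⟨p, hp, eq_posOf ?_ fun k hk => ?_⟩
  · simpa [homeSide, hp, vtx] using h_chip
  · by_cases hk_one : k.2 = 1
    · simpa [homeSide, hk_one, vtx] using (h_tri k.1).2.1
    · have h_off (i : Fin m) : pairC k.1 k.2 ≠ pairC i 1 := fun h =>
        hk_one (congrArg Prod.snd (pairC_injective (a₁ := k) (a₂ := (i, 1)) h))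
      simpa [homeSide, hk_one, vtx] using h_empty _ (pairC_injective.ne hk) h_off

end AuxGame

open AuxGame in
theorem statement4_general (m : ℕ) (hm : 1 ≤ m) (P : Pos m) (hP : IsStarting P) :
    ∃ τ : List (Move m), τ ≠ [] ∧ Leads τ P P ∧ ∀ v : Vtx m, flow τ v = 1 := by
  have : NeZero m := ⟨by omega⟩
  obtain ⟨p, hp, rfl⟩ := hP.exists_eq_posOf
  obtain ⟨τ, h_leads, h_edge⟩ := hasRoute_home_loop hp
  refine ⟨τ, ?_, h_leads, fun v => ?_⟩
  · rintro rfl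
    exact zero_ne_one (congrFun (edgeFlow_nil.symm.trans h_edge) (.cycle 0))
  · rw [flow_eq_edgeFlow_add, h_edge]
    norm_num

open AuxGame in
/-- There is a nonempty legal sequence `τ` leading from the
starting position `P` back to `P` with `F(τ, i, 2) = 1` for every `1 ≤ i ≤ m`. -/
theorem statement4 (m : ℕ) (hm : 1 ≤ m) (P : Pos m) (hP : IsStarting P) :
    ∃ τ : List (Move m), τ ≠ [] ∧ Leads τ P P ∧
      ∀ i : Fin m, flow τ (Vtx.tri i 1) = 1 := by
  obtain ⟨τ, h_ne, h_leads, h_flow⟩ := statement4_general m hm P hP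
  exact ⟨τ, h_ne, h_leads, fun i => h_flow (.tri i 1)⟩
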